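/- Let d ≥ 1, let g ≥ 0 be a constant, let I ⊆ ℝ be an open interval, let Ω₀ ⊆ ℝᵈ be a bounded open set, and let φ : I × closure(Ω₀) → ℝᵈ be continuous. For t ∈ I set Ω_t := φ(t, ·)''(Ω₀), and let O ⊆ ℝ × ℝᵈ be an open set containing { (t, φ(t,y)) : t ∈ I, y ∈ closure(Ω₀) }. Let v : O → ℝᵈ and p : O → ℝ be continuously differentiable. Assume: (a) for each (t,y) ∈ I × Ω₀ the partial derivative ∂_t φ(t,y) exists, is continuous in (t,y), and equals v(t, φ(t,y)); (b) for each t ∈ I, the map φ(t,·) restricted to Ω₀ is injective and preserves Lebesgue measure (the image of any measurable A ⊆ Ω₀ has the same Lebesgue measure as A); (c) on { (t,x) : t ∈ I, x ∈ Ω_t } one has ∂_t v + (v·∇)v = −∇p − g e_d and ∇·v = 0. Then the energy E(t) := ∫_{Ω_t} ( |v(t,x)|²/2 + g x·e_d ) dx is differentiable on I, with E′(t) = −∫_{Ω_t} v(t,x)·∇p(t,x) dx = −∫_{Ω_t} ∇·(p v)(t,x) dx for every t ∈ I. -/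

import Mathlib

open MeasureTheory

/-!
By incompressibility the energy can be pulled back to the fixed domain `Ω₀`: each `φ τ` is an
injective, measure-preserving map on `Ω₀`, so `setIntegral_image_eq` gives
`E(τ) = ∫_{Ω₀} F(τ, φ(τ,y)) dy` with `F = |v|²/2 + g x·e_d`. Along a particle path the momentum
equation yields `d/dτ F(τ, φ(τ,y)) = -(v·∇p)(τ, φ(τ,y))` (the gravity terms cancel), by the chain
rule `hasDerivAt_comp_path`. This function is continuous on `I × closure Ω₀`, hence bounded on
`[t-ε, t+ε] × closure Ω₀` by compactness, so one may differentiate under the integral sign; moving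
back to `Ω_t` gives `E'(t)`. The last equality is the pointwise identity
`∇·(p v) = v·∇p + p ∇·v = v·∇p`.
-/

/-- Change of variables for a continuous injective map that preserves the measure of subsets of `S`.
The Lusin–Souslin theorem makes such a map a measurable embedding, so nothing is required of
`f`. -/
lemma setIntegral_image_eq {d : ℕ} {S : Set (Fin d → ℝ)} (hS : MeasurableSet S)
    {ψ : (Fin d → ℝ) → (Fin d → ℝ)} (hc : ContinuousOn ψ S) (hinj : Set.InjOn ψ S)
    (hm : ∀ A ⊆ S, MeasurableSet A → volume (ψ '' A) = volume A) (f : (Fin d → ℝ) → ℝ) :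
    ∫ x in ψ '' S, f x = ∫ y in S, f (ψ y) := by
  have he : MeasurableEmbedding (S.domRestrict ψ) := hc.measurableEmbedding hS hinj
  have hmap : (Measure.comap (Subtype.val : S → _) volume).map (S.domRestrict ψ) =
      volume.restrict (ψ '' S) := by
    ext B hB
    rw [he.map_apply, (MeasurableEmbedding.subtype_coe hS).comap_apply, Measure.restrict_apply hB,
      ← hm _ (Subtype.coe_image_subset _ _)
        ((MeasurableEmbedding.subtype_coe hS).measurableSet_image.2 (he.measurable hB))]
    congr 1
    ext x
    simp only [Set.mem_image, Set.mem_preimage, Subtype.exists,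
      Set.mem_inter_iff]
    constructor
    · rintro ⟨y, ⟨z, hz, hzB, rfl⟩, rfl⟩
      exact ⟨hzB, z, hz, rfl⟩
    · rintro ⟨hxB, z, hz, rfl⟩
      exact ⟨z, ⟨z, hz, hxB, rfl⟩, rfl⟩
  rw [← hmap, he.integral_map]
  exact integral_subtype_comap hS fun y => f (ψ y)

/-- The material derivative: along a path `x` with velocity `u`, the time derivative of
`h(s, x(s))` is `∂_t h + u·∇h`. -/
lemma hasDerivAt_comp_path {d : ℕ} {h : ℝ × (Fin d → ℝ) → ℝ} {x : ℝ → (Fin d → ℝ)}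
    {u : Fin d → ℝ} {s : ℝ} (hh : DifferentiableAt ℝ h (s, x s)) (hx : HasDerivAt x u s) :
    HasDerivAt (fun r => h (r, x r))
      (fderiv ℝ h (s, x s) (1, 0) +
        ∑ i : Fin d, u i * fderiv ℝ h (s, x s) (0, Pi.single i 1)) s := by
  have h1 : HasDerivAt (fun r => (r, x r)) ((1 : ℝ), u) s := (hasDerivAt_id s).prodMk hx
  have h2 := hh.hasFDerivAt.comp_hasDerivAt s h1
  have h3 : ((1 : ℝ), u) = (1, 0) + ∑ i : Fin d, u i • ((0 : ℝ), (Pi.single i 1 : Fin d → ℝ)) := by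
    ext j
    · simp [Prod.fst_sum]
    · simp [Prod.snd_sum, Finset.sum_apply, Pi.single_apply]
  rw [h3, map_add, map_sum] at h2
  simp only [map_smul, smul_eq_mul] at h2
  exact h2

/-- Let `Ω₀ ⊆ ℝᵈ` be bounded open and `φ` a continuous flow map on
`I × closure Ω₀` (`I` an open interval), moving with a divergence-free velocity `v` (kinematic
condition (a)), injectively and preserving Lebesgue measure (b), where `(v, p)` are `C¹` on an
open set `O` containing the flowed set and solve the incompressible Euler equations with gravity
`g` on the moving domain `Ω_t = φ(t)''Ω₀` (c).  Then the energy
`E(t) = ∫_{Ω_t} (|v|²/2 + g x·e_d) dx` is differentiable on `I` with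
`E′(t) = −∫_{Ω_t} v·∇p dx = −∫_{Ω_t} ∇·(p v) dx`. -/
theorem statement12 (d : ℕ) (hd : 1 ≤ d) (g : ℝ) (hg : 0 ≤ g)
    (I : Set ℝ) (hIopen : IsOpen I) (hIconv : Convex ℝ I)
    (Ω₀ : Set (Fin d → ℝ)) (hΩopen : IsOpen Ω₀) (hΩbdd : Bornology.IsBounded Ω₀)
    (φ : ℝ → (Fin d → ℝ) → (Fin d → ℝ))
    (hφcont : ContinuousOn (fun q : ℝ × (Fin d → ℝ) => φ q.1 q.2) (I ×ˢ closure Ω₀))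
    (O : Set (ℝ × (Fin d → ℝ))) (hOopen : IsOpen O)
    (hOgraph : ∀ t ∈ I, ∀ y ∈ closure Ω₀, (t, φ t y) ∈ O)
    (v : ℝ × (Fin d → ℝ) → (Fin d → ℝ)) (p : ℝ × (Fin d → ℝ) → ℝ)
    (hv : ContDiffOn ℝ 1 v O) (hp : ContDiffOn ℝ 1 p O)
    -- (a) the kinematic condition: `∂_t φ(t,y)` exists, is continuous in `(t,y)`,
    -- and equals `v(t, φ(t,y))`
    (ha₁ : ∀ t ∈ I, ∀ y ∈ Ω₀, HasDerivAt (fun s => φ s y) (v (t, φ t y)) t)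
    (ha₂ : ContinuousOn (fun q : ℝ × (Fin d → ℝ) => v (q.1, φ q.1 q.2)) (I ×ˢ Ω₀))
    -- (b) for each `t ∈ I`, `φ(t,·)` is injective on `Ω₀` and preserves Lebesgue measure
    (hb₁ : ∀ t ∈ I, Set.InjOn (φ t) Ω₀)
    (hb₂ : ∀ t ∈ I, ∀ A ⊆ Ω₀, MeasurableSet A → volume (φ t '' A) = volume A)
    -- (c) the incompressible Euler equations with gravity `g` hold on the moving domain
    (hmom : ∀ t ∈ I, ∀ x ∈ φ t '' Ω₀, ∀ j : Fin d,
      fderiv ℝ (fun w => v w j) (t, x) (1, 0) +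
          ∑ i : Fin d, v (t, x) i * fderiv ℝ (fun w => v w j) (t, x) (0, Pi.single i 1) =
        -(fderiv ℝ p (t, x) (0, Pi.single j 1)) - (if (j : ℕ) = d - 1 then g else 0))
    (hdiv : ∀ t ∈ I, ∀ x ∈ φ t '' Ω₀,
      ∑ i : Fin d, fderiv ℝ (fun w => v w i) (t, x) (0, Pi.single i 1) = 0) :
    ∀ t ∈ I,
      HasDerivAt
        (fun τ => ∫ x in φ τ '' Ω₀,
          ((∑ i : Fin d, v (τ, x) i ^ 2) / 2 + g * x ⟨d - 1, by omega⟩))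
        (-(∫ x in φ t '' Ω₀,
            ∑ i : Fin d, v (t, x) i * fderiv ℝ p (t, x) (0, Pi.single i 1))) t ∧
      (∫ x in φ t '' Ω₀, ∑ i : Fin d, v (t, x) i * fderiv ℝ p (t, x) (0, Pi.single i 1)) =
        ∫ x in φ t '' Ω₀,
          ∑ i : Fin d, fderiv ℝ (fun w => p w * v w i) (t, x) (0, Pi.single i 1) := by
  classical
  have hvd : ∀ w ∈ O, ∀ j, DifferentiableAt ℝ (fun w => v w j) w := fun w hw j =>
    (differentiableAt_pi.1 ((hv.differentiableOn one_ne_zero).differentiableAt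
      (hOopen.mem_nhds hw))) j
  have hpd : ∀ w ∈ O, DifferentiableAt ℝ p w := fun w hw =>
    (hp.differentiableOn one_ne_zero).differentiableAt (hOopen.mem_nhds hw)
  have hsub : Ω₀ ⊆ closure Ω₀ := subset_closure
  have hφt : ∀ t ∈ I, ContinuousOn (φ t) Ω₀ := fun t ht =>
    hφcont.comp (f := fun y => (t, y)) (by fun_prop) fun y hy => ⟨ht, hsub hy⟩
  have himg : ∀ t ∈ I, MeasurableSet (φ t '' Ω₀) := fun t ht =>
    hΩopen.measurableSet.image_of_continuousOn_injOn (hφt t ht) (hb₁ t ht)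
  set G : ℝ × (Fin d → ℝ) → ℝ := fun w =>
    -∑ i : Fin d, v w i * fderiv ℝ p w (0, Pi.single i 1) with hG
  set F : ℝ × (Fin d → ℝ) → ℝ := fun w =>
    (∑ i : Fin d, v w i ^ 2) / 2 + g * w.2 ⟨d - 1, by omega⟩ with hF
  have hvc : ∀ i, ContinuousOn (fun w => v w i) O := fun i w hw =>
    (hvd w hw i).continuousAt.continuousWithinAt
  have hGc : ContinuousOn G O := by
    refine (continuousOn_finsetSum _ fun i _ => (hvc i).mul ?_).neg
    exact (hp.continuousOn_fderiv_of_isOpen hOopen le_rfl).clm_apply continuousOn_const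
  have hFc : ContinuousOn F O := by
    refine ((continuousOn_finsetSum _ fun i _ => (hvc i).pow 2).div_const 2).add ?_
    fun_prop
  have hpath : ContinuousOn (fun q : ℝ × (Fin d → ℝ) => (q.1, φ q.1 q.2)) (I ×ˢ closure Ω₀) :=
    continuousOn_fst.prodMk hφcont
  have hmaps : Set.MapsTo (fun q : ℝ × (Fin d → ℝ) => (q.1, φ q.1 q.2)) (I ×ˢ closure Ω₀) O :=
    fun q hq => hOgraph q.1 hq.1 q.2 hq.2
  have hGφ := hGc.comp hpath hmaps
  have hFφ := hFc.comp hpath hmaps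
  -- The pointwise energy balance along particle paths, from the momentum equation.
  have hderiv : ∀ s ∈ I, ∀ y ∈ Ω₀, HasDerivAt (fun r => F (r, φ r y)) (G (s, φ s y)) s := by
    intro s hs y hy
    have hO := hOgraph s hs y (hsub hy)
    have h1 := fun j => (hasDerivAt_comp_path (hvd _ hO j) (ha₁ s hs y hy)).pow 2
    have h2 := hasDerivAt_pi.1 (ha₁ s hs y hy) ⟨d - 1, by omega⟩
    have h3 := ((HasDerivAt.fun_sum fun j (_ : j ∈ Finset.univ) => h1 j).div_const 2).add
      (h2.const_mul g)
    refine h3.congr_deriv ?_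
    simp only [hmom s hs _ ⟨y, hy, rfl⟩]
    have hsum : ∑ j : Fin d, v (s, φ s y) j * (if (j : ℕ) = d - 1 then g else 0) =
        g * v (s, φ s y) ⟨d - 1, by omega⟩ := by
      rw [Finset.sum_eq_single ⟨d - 1, by omega⟩]
      · simp [mul_comm]
      · intro j _ hj
        rw [if_neg (fun h => hj (Fin.ext h)), mul_zero]
      · simp
    simp only [hG]
    rw [← hsum, Finset.sum_div, ← Finset.sum_add_distrib, ← Finset.sum_neg_distrib]
    refine Finset.sum_congr rfl fun j _ => ?_
    push_cast
    ring
  intro t ht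
  have hcv : ∀ τ ∈ I, ∀ f : (Fin d → ℝ) → ℝ, ∫ x in φ τ '' Ω₀, f x = ∫ y in Ω₀, f (φ τ y) :=
    fun τ hτ f => setIntegral_image_eq hΩopen.measurableSet (hφt τ hτ) (hb₁ τ hτ) (hb₂ τ hτ) f
  refine ⟨?_, ?_⟩
  · obtain ⟨ε, hε, hball⟩ := Metric.nhds_basis_closedBall.mem_iff.1 (hIopen.mem_nhds ht)
    have hK : IsCompact (closure Ω₀) := hΩbdd.isCompact_closure
    obtain ⟨C, hC⟩ := ((isCompact_closedBall t ε).prod hK).exists_bound_of_continuousOn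
      (hGφ.mono (Set.prod_mono hball subset_rfl))
    have : IsFiniteMeasure (volume.restrict Ω₀) :=
      isFiniteMeasure_restrict.2 hΩbdd.measure_lt_top.ne
    have hFs : ∀ s ∈ I, ContinuousOn (fun y => F (s, φ s y)) (closure Ω₀) := fun s hs =>
      hFφ.comp (f := fun y => (s, y)) (by fun_prop) fun y hy => ⟨hs, hy⟩
    have hGs : ContinuousOn (fun y => G (t, φ t y)) (closure Ω₀) :=
      hGφ.comp (f := fun y => (t, y)) (by fun_prop) fun y hy => ⟨ht, hy⟩
    have key := (hasDerivAt_integral_of_dominated_loc_of_deriv_le (μ := volume.restrict Ω₀)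
      (F := fun s y => F (s, φ s y)) (F' := fun s y => G (s, φ s y)) (x₀ := t)
      (bound := fun _ => C) (Metric.closedBall_mem_nhds t hε)
      (Filter.eventually_of_mem (hIopen.mem_nhds ht) fun s hs =>
        ((hFs s hs).mono hsub).aestronglyMeasurable hΩopen.measurableSet)
      (((hFs t ht).integrableOn_compact hK).mono_set hsub)
      ((hGs.mono hsub).aestronglyMeasurable hΩopen.measurableSet)
      ((ae_restrict_iff' hΩopen.measurableSet).2 (Filter.Eventually.of_forall
        fun y hy s hs => hC (s, y) ⟨hs, hsub hy⟩))
      (integrable_const C)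
      ((ae_restrict_iff' hΩopen.measurableSet).2 (Filter.Eventually.of_forall
        fun y hy s hs => hderiv s (hball hs) y hy))).2
    rw [hcv t ht, ← integral_neg]
    refine key.congr_of_eventuallyEq ?_
    filter_upwards [hIopen.mem_nhds ht] with τ hτ
    exact hcv τ hτ _
  · refine setIntegral_congr_fun (himg t ht) fun x hx => ?_
    have hO : (t, x) ∈ O := by
      obtain ⟨y, hy, rfl⟩ := hx
      exact hOgraph t ht y (hsub hy)
    have h1 : ∀ i : Fin d, fderiv ℝ (fun w => p w * v w i) (t, x) (0, Pi.single i 1) =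
        p (t, x) * fderiv ℝ (fun w => v w i) (t, x) (0, Pi.single i 1) +
          v (t, x) i * fderiv ℝ p (t, x) (0, Pi.single i 1) := fun i => by
      rw [fderiv_fun_mul (hpd _ hO) (hvd _ hO i)]
      simp
    simp only [h1, Finset.sum_add_distrib, ← Finset.mul_sum, hdiv t ht x hx, mul_zero, zero_add]
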